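/- The image in PGL(3,ℂ) of the subgroup ⟨σ, φ⟩ ⊆ GL(3,ℂ) under the canonical projection GL(3,ℂ) → PGL(3,ℂ) has order 720, and there exists a group homomorphism ψ : ℤ/2 → Aut(SL(2,5)) such that this image is isomorphic to (SL(2,5) ⋊_ψ ℤ/2) × ℤ/3. -/

import Mathlib

noncomputable section
open Matrix

def zeta5 : ℂ := Complex.exp (2 * Real.pi * Complex.I / 5)

def sqrt5 : ℂ := zeta5 - zeta5 ^ 2 - zeta5 ^ 3 + zeta5 ^ 4

def alpha : Matrix (Fin 2) (Fin 2) ℂ := -(Matrix.of ![![zeta5 ^ 3, 0], ![0, zeta5 ^ 2]])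
def beta : Matrix (Fin 2) (Fin 2) ℂ := Matrix.of ![![0, 1], ![-1, 0]]
def gamma : Matrix (Fin 2) (Fin 2) ℂ :=
  (zeta5 ^ 2 - zeta5 ^ 3)⁻¹ •
    Matrix.of ![![zeta5 + zeta5⁻¹, 1], ![1, -(zeta5 + zeta5⁻¹)]]

/-- The block-diagonal embedding of a `2 × 2` matrix into `GL(3)`, with last diagonal entry 1. -/
def emb (A : Matrix (Fin 2) (Fin 2) ℂ) : Matrix (Fin 3) (Fin 3) ℂ :=
  Matrix.of ![![A 0 0, A 0 1, 0], ![A 1 0, A 1 1, 0], ![0, 0, 1]]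

def alpha' : Matrix (Fin 3) (Fin 3) ℂ := emb alpha
def beta' : Matrix (Fin 3) (Fin 3) ℂ := emb beta
def gamma' : Matrix (Fin 3) (Fin 3) ℂ := emb gamma

def sigma : Matrix (Fin 3) (Fin 3) ℂ :=
  Matrix.of ![![(zeta5 - zeta5 ^ 4) / sqrt5, (zeta5 ^ 3 - zeta5 ^ 2) / sqrt5, 0],
    ![(zeta5 ^ 3 - zeta5 ^ 2) / sqrt5, -((zeta5 - zeta5 ^ 4) / sqrt5), 0],
    ![0, 0, 1]]

def tau : Matrix (Fin 3) (Fin 3) ℂ := Matrix.diagonal ![zeta5, 1, 1]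

def rho : Matrix (Fin 3) (Fin 3) ℂ := Matrix.diagonal ![zeta5 ^ 3, zeta5 ^ 2, 1]

/-- The subgroup of `GL(3, ℂ)` generated by the invertible matrices in `S`. -/
def gen3 (S : Set (Matrix (Fin 3) (Fin 3) ℂ)) : Subgroup (GL (Fin 3) ℂ) :=
  Subgroup.closure {g : GL (Fin 3) ℂ | (g : Matrix (Fin 3) (Fin 3) ℂ) ∈ S}

/-- `S(2,1) = ⟨α', β', γ'⟩`. -/
def S21 : Subgroup (GL (Fin 3) ℂ) := gen3 {alpha', beta', gamma'}

abbrev SL25 := Matrix.SpecialLinearGroup (Fin 2) (ZMod 5)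

/-- The subgroup of nonzero scalar matrices in `GL(3, ℂ)`. -/
def scalarSub : Subgroup (GL (Fin 3) ℂ) :=
  (Units.map (algebraMap ℂ (Matrix (Fin 3) (Fin 3) ℂ)).toMonoidHom).range

instance : scalarSub.Normal := by
  constructor
  rintro n ⟨c, rfl⟩ g
  refine ⟨c, ?_⟩
  ext
  simp only [Units.coe_map, RingHom.toMonoidHom_eq_coe, MonoidHom.coe_coe, Units.val_mul]
  rw [← Algebra.commutes (↑c : ℂ) (↑g : Matrix (Fin 3) (Fin 3) ℂ), mul_assoc,
    ← Units.val_mul, mul_inv_cancel, Units.val_one, mul_one]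

/-- `PGL(3, ℂ)`: the quotient of `GL(3, ℂ)` by the nonzero scalar matrices. -/
abbrev PGL3 := GL (Fin 3) ℂ ⧸ scalarSub

def xi : ℂ := Complex.exp (2 * Real.pi * Complex.I / 60)

/-- `φ = diag(ζ₅, 1, ξ)` with `ξ¹² = ζ₅`. -/
def phi : Matrix (Fin 3) (Fin 3) ℂ := Matrix.diagonal ![zeta5, 1, xi]


def Um (t : ZMod 5) : Matrix (Fin 2) (Fin 2) ℂ := !![(zeta5^3)^t.val, 0; 0, (zeta5^2)^t.val]
def Dp : ZMod 5 → ℤ := ![0,1,0,0,-1]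
def Dq : ZMod 5 → ℤ := ![0,0,1,-1,0]
def Dm (t : ZMod 5) : Matrix (Fin 2) (Fin 2) ℂ := !![(Dp t : ℂ), (Dq t : ℂ); -(Dq t : ℂ), (Dp t : ℂ)]
def Wm : Matrix (Fin 2) (Fin 2) ℂ :=
  !![(zeta5 - zeta5 ^ 4) / sqrt5, (zeta5 ^ 3 - zeta5 ^ 2) / sqrt5;
    (zeta5 ^ 3 - zeta5 ^ 2) / sqrt5, -((zeta5 - zeta5 ^ 4) / sqrt5)]

lemma zprim : IsPrimitiveRoot zeta5 5 := by
  have := Complex.isPrimitiveRoot_exp 5 (by norm_num)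
  simpa [zeta5] using this

lemma z5 : zeta5^5 = 1 := zprim.pow_eq_one

lemma zsum : zeta5^4 + zeta5^3 + zeta5^2 + zeta5 + 1 = 0 := by
  have h1 : zeta5 - 1 ≠ 0 := sub_ne_zero.2 (zprim.ne_one (by norm_num))
  apply mul_left_cancel₀ h1
  linear_combination z5

lemma s5sq : sqrt5^2 = 5 := by
  have := zsum; have := z5
  unfold sqrt5
  grind

lemma s5ne : sqrt5 ≠ 0 := by
  intro h; have := s5sq; simp [h] at this

lemma s5inv : sqrt5⁻¹ = sqrt5/5 := by
  have := s5ne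
  field_simp
  exact s5sq.symm

lemma U_zero : Um 0 = 1 := by
  ext i j; fin_cases i <;> fin_cases j <;> simp [Um]

lemma U_add (s t : ZMod 5) : Um (s+t) = Um s * Um t := by
  have h3 : (zeta5^3)^5 = 1 := by rw [← pow_mul, mul_comm, pow_mul, z5, one_pow]
  have h2 : (zeta5^2)^5 = 1 := by rw [← pow_mul, mul_comm, pow_mul, z5, one_pow]
  simp only [Um, ZMod.val_add, ← pow_eq_pow_mod _ h3, ← pow_eq_pow_mod _ h2]
  simp [pow_add]

lemma D_one : Dm 1 = 1 := by
  ext i j; fin_cases i <;> fin_cases j <;> simp [Dm, Dp, Dq]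

lemma D_mul (s t : ZMod 5) : Dm (s*t) = Dm s * Dm t := by
  have h1 : ∀ s t, Dp (s*t) = Dp s * Dp t - Dq s * Dq t := by decide +kernel
  have h2 : ∀ s t, Dq (s*t) = Dp s * Dq t + Dq s * Dp t := by decide +kernel
  simp only [Dm, h1, h2]
  ext i j; fin_cases i <;> fin_cases j <;> simp <;> ring

lemma UD (t a : ZMod 5) (ha : a ≠ 0) : Um t * Dm a = Dm a * Um (a⁻¹*a⁻¹*t) := by
  have h : ∀ a t : ZMod 5, a ≠ 0 → (Dp a = 0 ∧ (a⁻¹*a⁻¹*t) = -t) ∨ (Dq a = 0 ∧ (a⁻¹*a⁻¹*t) = t) := by decide +kernel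
  obtain ⟨h1, h2⟩ | ⟨h1, h2⟩ := h a t ha
  · rw [h2]
    have v : (t.val = 0 ∧ (-t).val = 0) ∨ (t.val = 1 ∧ (-t).val = 4) ∨ (t.val = 2 ∧ (-t).val = 3) ∨
        (t.val = 3 ∧ (-t).val = 2) ∨ (t.val = 4 ∧ (-t).val = 1) := by
      clear h1 h2 ha; revert t; decide +kernel
    have e1 : (zeta5^3)^(-t).val = (zeta5^2)^t.val := by
      have := z5
      rcases v with ⟨h, h'⟩ | ⟨h, h'⟩ | ⟨h, h'⟩ | ⟨h, h'⟩ | ⟨h, h'⟩ <;> rw [h', h] <;> grind only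
    have e2 : (zeta5^2)^(-t).val = (zeta5^3)^t.val := by
      have := z5
      rcases v with ⟨h, h'⟩ | ⟨h, h'⟩ | ⟨h, h'⟩ | ⟨h, h'⟩ | ⟨h, h'⟩ <;> rw [h', h] <;> grind only
    simp [Um, Dm, h1, e1, e2, mul_comm]
  · rw [h2]
    simp [Um, Dm, h1, mul_comm]

def wA : ℂ := (zeta5 - zeta5 ^ 4) / sqrt5
def wB : ℂ := (zeta5 ^ 3 - zeta5 ^ 2) / sqrt5
lemma wA5 : 5 * wA = zeta5 + 2*zeta5^2 - 2*zeta5^3 - zeta5^4 := by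
  have := zsum; have := z5
  rw [wA, div_eq_mul_inv, s5inv, sqrt5]
  grind
lemma wB5 : 5 * wB = - 2*zeta5 + zeta5^2 - zeta5^3 + 2*zeta5^4 := by
  have := zsum; have := z5
  rw [wB, div_eq_mul_inv, s5inv, sqrt5]
  grind
lemma Wm_eq : Wm = !![wA, wB; wB, -wA] := rfl

lemma WW : Wm * Wm = Dm (-1) := by
  have := zsum; have := z5; have := wA5; have := wB5
  have h1 : Dp (-1) = -1 := by decide +kernel
  have h2 : Dq (-1) = 0 := by decide +kernel
  rw [Wm_eq]
  ext i j; fin_cases i <;> fin_cases j <;> simp [Dm, h1, h2] <;> grind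

lemma DW (a : ZMod 5) (ha : a ≠ 0) : Dm a * Wm = Wm * Dm a⁻¹ := by
  have h1 : ∀ a, a ≠ 0 → Dp a⁻¹ = Dp a := by decide +kernel
  have h2 : ∀ a, a ≠ 0 → Dq a⁻¹ = -Dq a := by decide +kernel
  rw [Wm_eq]
  ext i j; fin_cases i <;> fin_cases j <;> simp [Dm, h1 a ha, h2 a ha] <;> ring

lemma WUW (t : ZMod 5) (ht : t ≠ 0) :
    Wm * Um t * Wm = Um (-t⁻¹) * Wm * Dm t * Um (-t⁻¹) := by
  have := zsum; have := z5; have := wA5; have := wB5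
  have e : (t = 1 ∧ -t⁻¹ = 4) ∨ (t = 2 ∧ -t⁻¹ = 2) ∨ (t = 3 ∧ -t⁻¹ = 3) ∨ (t = 4 ∧ -t⁻¹ = 1) := by
    revert t; decide +kernel
  have v1 : (1:ZMod 5).val = 1 := rfl
  have v2 : (2:ZMod 5).val = 2 := rfl
  have v3 : (3:ZMod 5).val = 3 := rfl
  have v4 : (4:ZMod 5).val = 4 := rfl
  have p1 : Dp 1 = 1 := rfl
  have p2 : Dp 2 = 0 := rfl
  have p3 : Dp 3 = 0 := rfl
  have p4 : Dp 4 = -1 := rfl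
  have q1 : Dq 1 = 0 := rfl
  have q2 : Dq 2 = 1 := rfl
  have q3 : Dq 3 = -1 := rfl
  have q4 : Dq 4 = 0 := rfl
  rw [Wm_eq]
  rcases e with ⟨h, h'⟩ | ⟨h, h'⟩ | ⟨h, h'⟩ | ⟨h, h'⟩ <;> rw [h', h] <;>
  (ext i j; fin_cases i <;> fin_cases j <;>
    simp [Dm, Um, v1, v2, v3, v4, p1, p2, p3, p4, q1, q2, q3, q4] <;> grind)

def fm (a b c d : ZMod 5) : Matrix (Fin 2) (Fin 2) ℂ :=
  if c = 0 then Dm a * Um (a⁻¹*b) else Um (a*c⁻¹) * Wm * Dm c * Um (d*c⁻¹)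

lemma fm_U (t a b c d : ZMod 5) (h : a*d - b*c = 1) :
    fm (a+t*c) (b+t*d) c d = Um t * fm a b c d := by
  unfold fm
  by_cases hc : c = 0
  · have k : ∀ t a b d : ZMod 5, a * d = 1 → a ≠ 0 ∧
      a⁻¹ * (b + t*d) = a⁻¹*a⁻¹*t + a⁻¹*b := by decide +kernel
    subst hc
    obtain ⟨ha, k⟩ := k t a b d (by simpa using h)
    simp only [if_true, mul_zero, add_zero, k, U_add]
    rw [← mul_assoc, ← mul_assoc, UD t a ha]
  · have k : ∀ t a c : ZMod 5, c ≠ 0 → (a + t*c) * c⁻¹ = t + a*c⁻¹ := by decide +kernel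
    simp only [if_neg hc, k t a c hc, U_add]
    simp only [mul_assoc]

lemma fm_D (e a b c d : ZMod 5) (he : e ≠ 0) (h : a*d - b*c = 1) :
    fm (e*a) (e*b) (e⁻¹*c) (e⁻¹*d) = Dm e * fm a b c d := by
  unfold fm
  by_cases hc : c = 0
  · have k : ∀ e a b : ZMod 5, e ≠ 0 → (e*a)⁻¹ * (e*b) = a⁻¹*b := by decide +kernel
    subst hc
    simp only [if_true, mul_zero, k e a b he, D_mul, mul_assoc]
  · have k : ∀ e c : ZMod 5, e ≠ 0 → c ≠ 0 → e⁻¹ * c ≠ 0 := by decide +kernel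
    have k1 : ∀ e c d : ZMod 5, e ≠ 0 → c ≠ 0 → e⁻¹ * d * (e⁻¹*c)⁻¹ = d * c⁻¹ := by decide +kernel
    have k2 : ∀ e c a : ZMod 5, e ≠ 0 → c ≠ 0 → a * c⁻¹ = e⁻¹*e⁻¹*(e * a * (e⁻¹*c)⁻¹) := by
      decide +kernel
    simp only [if_neg hc, if_neg (k e c he hc), k1 e c d he hc]
    rw [k2 e c a he hc, D_mul]
    generalize e * a * (e⁻¹*c)⁻¹ = r
    simp only [← mul_assoc (Dm e)]
    rw [← UD _ e he, mul_assoc _ (Dm e) Wm, DW e he]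
    simp only [mul_assoc]

lemma fm_W (a b c d : ZMod 5) (h : a*d - b*c = 1) :
    fm (-c) (-d) a b = Wm * fm a b c d := by
  unfold fm
  by_cases hc : c = 0
  · subst hc
    have ha : a ≠ 0 := by rintro rfl; simp at h; exact absurd h (by decide)
    have k : ∀ a b : ZMod 5, b * a⁻¹ = a⁻¹ * b := by decide +kernel
    simp only [if_neg ha, if_true, neg_zero, zero_mul, U_zero, one_mul, k a b, mul_assoc]
  · by_cases ha : a = 0
    · subst ha
      have k : ∀ c d : ZMod 5, (-c)⁻¹ * (-d) = d * c⁻¹ ∧ - c = -1 * c := by decide +kernel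
      obtain ⟨k1, k2⟩ := k c d
      simp only [if_neg hc, if_true, zero_mul, U_zero, one_mul, k1]
      simp only [← mul_assoc]
      rw [WW, ← D_mul, ← k2]
    · simp only [if_neg hc, if_neg ha]
      have h1 : ∀ a c : ZMod 5, c ≠ 0 → a ≠ 0 → a * c⁻¹ ≠ 0 := by decide +kernel
      have h2 : ∀ a c : ZMod 5, c ≠ 0 → a ≠ 0 → -c * a⁻¹ = -(a*c⁻¹)⁻¹ := by decide +kernel
      have h3 : ∀ a c : ZMod 5, c ≠ 0 → a = a * c⁻¹ * c := by decide +kernel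
      have h4 : ∀ a b c d : ZMod 5, a * d - b * c = 1 → c ≠ 0 → a ≠ 0 →
        b * a⁻¹ = c⁻¹ * c⁻¹ * (-(a*c⁻¹)⁻¹) + d*c⁻¹ := by decide +kernel
      replace h1 := h1 a c hc ha
      replace h2 := h2 a c hc ha
      replace h3 := h3 a c hc
      replace h4 := h4 a b c d h hc ha
      rw [h2, h4, U_add]
      nth_rw 2 [h3]
      rw [D_mul]
      simp only [← mul_assoc]
      rw [WUW _ h1]
      rw [mul_assoc _ (Um _) (Dm c), UD _ c hc]
      simp only [← mul_assoc]

def fS (x : SL25) : Matrix (Fin 2) (Fin 2) ℂ := fm (x 0 0) (x 0 1) (x 1 0) (x 1 1)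

def uS (t : ZMod 5) : SL25 := ⟨!![1, t; 0, 1], by simp⟩
def wS : SL25 := ⟨!![0, -1; 1, 0], by simp⟩
def dS0 (a : ZMod 5) (h : a ≠ 0) : SL25 := ⟨!![a, 0; 0, a⁻¹], by
  revert a; decide +kernel⟩
def dS (a : ZMod 5) : SL25 := if h : a ≠ 0 then dS0 a h else 1

lemma uS_coe (t : ZMod 5) : (uS t : Matrix (Fin 2) (Fin 2) (ZMod 5)) = !![1, t; 0, 1] := rfl
lemma wS_coe : (wS : Matrix (Fin 2) (Fin 2) (ZMod 5)) = !![0, -1; 1, 0] := rfl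
lemma dS_coe (a : ZMod 5) (ha : a ≠ 0) :
    (dS a : Matrix (Fin 2) (Fin 2) (ZMod 5)) = !![a, 0; 0, a⁻¹] := by
  have : dS a = dS0 a ha := dif_pos ha
  rw [this]
  rfl

lemma det_eq (x : SL25) : x 0 0 * x 1 1 - x 0 1 * x 1 0 = 1 := by
  have := x.2
  rwa [Matrix.det_fin_two] at this

lemma fS_u (t : ZMod 5) (x : SL25) : fS (uS t * x) = Um t * fS x := by
  rw [fS, fS, ← fm_U t _ _ _ _ (det_eq x)]
  congr 1 <;> simp [uS_coe, Matrix.SpecialLinearGroup.coe_mul, Matrix.mul_apply, Fin.sum_univ_two]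

lemma fS_w (x : SL25) : fS (wS * x) = Wm * fS x := by
  rw [fS, fS, ← fm_W _ _ _ _ (det_eq x)]
  congr 1 <;> simp [wS_coe, Matrix.SpecialLinearGroup.coe_mul, Matrix.mul_apply, Fin.sum_univ_two]

lemma fS_d (a : ZMod 5) (ha : a ≠ 0) (x : SL25) : fS (dS a * x) = Dm a * fS x := by
  rw [fS, fS, ← fm_D a _ _ _ _ ha (det_eq x)]
  congr 1 <;> simp [dS_coe a ha, Matrix.SpecialLinearGroup.coe_mul, Matrix.mul_apply, Fin.sum_univ_two]

lemma fS_one : fS 1 = 1 := by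
  simp [fS, fm, D_one, U_zero]

lemma bruhat (x : SL25) : (∃ a t, a ≠ 0 ∧ x = dS a * uS t) ∨
    ∃ s c t, c ≠ 0 ∧ x = uS s * (wS * (dS c * uS t)) := by
  have h := det_eq x
  by_cases hc : x 1 0 = 0
  · left
    have k : ∀ a b d : ZMod 5, a * d = 1 → a ≠ 0 ∧ a * (a⁻¹ * b) = b ∧ d = a⁻¹ := by decide +kernel
    obtain ⟨k1, k2, k3⟩ := k (x 0 0) (x 0 1) (x 1 1) (by simpa [hc] using h)
    refine ⟨x 0 0, (x 0 0)⁻¹ * x 0 1, k1, ?_⟩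
    ext i j
    fin_cases i <;> fin_cases j <;> simp [dS_coe _ k1, uS_coe, Matrix.SpecialLinearGroup.coe_mul, Matrix.mul_apply, Fin.sum_univ_two, k2, k3, hc]
  · right
    have k : ∀ a b c d : ZMod 5, c ≠ 0 → a * d - b * c = 1 → a = a * c⁻¹ * c ∧ d = c * (d * c⁻¹) ∧
      b = a * c⁻¹ * (c * (d * c⁻¹)) + -c⁻¹ := by decide +kernel
    obtain ⟨k1, k2, k3⟩ := k _ _ _ _ hc h
    refine ⟨x 0 0 * (x 1 0)⁻¹, x 1 0, x 1 1 * (x 1 0)⁻¹, hc, ?_⟩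
    ext i j
    fin_cases i <;> fin_cases j <;>
      simp only [dS_coe _ hc, uS_coe, wS_coe, Matrix.mul_apply, Fin.sum_univ_two, Matrix.SpecialLinearGroup.coe_mul]
    · simpa [hc] using k1
    · simp [hc]; convert k3 using 1; ring
    · simp [hc]
    · simpa [hc] using k2

lemma fS_mul (x y : SL25) : fS (x * y) = fS x * fS y := by
  have hu : ∀ t, fS (uS t) = Um t := fun t => by simpa [fS_one] using fS_u t 1
  obtain ⟨a, t, ha, rfl⟩ | ⟨s, c, t, hc, rfl⟩ := bruhat x
  · simp only [mul_assoc, fS_d a ha, fS_u, hu]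
  · simp only [mul_assoc, fS_d c hc, fS_u, hu, fS_w]

def rhoM : SL25 →* Matrix (Fin 2) (Fin 2) ℂ := ⟨⟨fS, fS_one⟩, fS_mul⟩
def rhoU : SL25 →* GL (Fin 2) ℂ := rhoM.toHomUnits

lemma rhoU_val (x : SL25) : (rhoU x : Matrix (Fin 2) (Fin 2) ℂ) = fS x := rfl

lemma fS_uS (t) : fS (uS t) = Um t := by simpa [fS_one] using fS_u t 1
lemma fS_wS : fS wS = Wm := by simpa [fS_one] using fS_w 1
lemma fS_dS (a) (ha : a ≠ 0) : fS (dS a) = Dm a := by simpa [fS_one] using fS_d a ha 1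

lemma wB_ne : wB ≠ 0 := by
  apply div_ne_zero _ s5ne
  intro h
  have h1 : zeta5 - 1 ≠ 0 := sub_ne_zero.2 (zprim.ne_one (by norm_num))
  have h0 : zeta5 ≠ 0 := zprim.ne_zero (by norm_num)
  have : zeta5^2*(zeta5-1) = 0 := by linear_combination h
  simp [h0, h1] at this

lemma wA_ne : wA ≠ 0 := by
  apply div_ne_zero _ s5ne
  intro h
  have h0 : zeta5 ≠ 0 := zprim.ne_zero (by norm_num)
  have h1 : zeta5^3 - 1 ≠ 0 := sub_ne_zero.2 (zprim.pow_ne_one_of_pos_of_lt (by norm_num) (by norm_num))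
  have : zeta5*(zeta5^3-1) = 0 := by linear_combination -h
  simp [h0, h1] at this

lemma fS_inj (x : SL25) (h : fS x = 1) : x = 1 := by
  have h0 : zeta5 ≠ 0 := zprim.ne_zero (by norm_num)
  obtain ⟨a, t, ha, rfl⟩ | ⟨s, c, t, hc, rfl⟩ := bruhat x
  · rw [fS_d a ha, fS_uS] at h
    have e00 := congrFun (congrFun h 0) 0
    have e01 := congrFun (congrFun h 0) 1
    have e11 := congrFun (congrFun h 1) 1
    simp [Dm, Um, Matrix.mul_apply, Fin.sum_univ_two, h0] at e00 e01 e11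
    have k : ∀ a, a ≠ 0 → Dq a = 0 → (a = 1 ∧ Dp a = 1) ∨ (a = 4 ∧ Dp a = -1) := by decide +kernel
    have k1 : ∀ t : ZMod 5, t.val = 0 → t = 0 := by decide +kernel
    have hlt : t.val < 5 := ZMod.val_lt t
    obtain ⟨rfl, k⟩ | ⟨rfl, k⟩ := k a ha e01
    · rw [k] at e11
      have := (zprim.pow_eq_one_iff_dvd (2 * t.val)).1 (by rw [pow_mul]; simpa using e11)
      have ht := k1 t (by omega)
      subst ht
      ext i j
      fin_cases i <;> fin_cases j <;> simp [dS_coe _ ha, uS_coe, Matrix.SpecialLinearGroup.coe_mul, Matrix.mul_apply]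
    · rw [k] at e11 e00
      exfalso
      have e : (zeta5^2)^t.val = -1 := by push_cast at e11; linear_combination -e11
      have e' : ((zeta5^2)^t.val)^5 = 1 := by
        rw [← pow_mul, ← pow_mul, show 2 * (t.val * 5) = 5 * (2*t.val) by ring, pow_mul, z5, one_pow]
      rw [e] at e'
      norm_num at e'
  · exfalso
    rw [fS_u, fS_w, fS_d c hc, fS_uS, Wm_eq] at h
    have e00 := congrFun (congrFun h 0) 0
    have e01 := congrFun (congrFun h 0) 1
    have e11 := congrFun (congrFun h 1) 1
    have e10 := congrFun (congrFun h 1) 0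
    have k : ∀ a, a ≠ 0 → (Dq a = 0 ∧ Dp a ≠ 0) ∨ (Dp a = 0 ∧ Dq a ≠ 0) := by decide +kernel
    obtain ⟨k1, k2⟩ | ⟨k1, k2⟩ := k c hc <;>
    simp [Dm, Um, Matrix.mul_apply, Fin.sum_univ_two, h0, k1, k2, wA_ne, wB_ne] at e00 e01 e11 e10

lemma xprim : IsPrimitiveRoot xi 60 := by
  have := Complex.isPrimitiveRoot_exp 60 (by norm_num)
  simpa [xi] using this

lemma x60 : xi^60 = 1 := xprim.pow_eq_one
lemma x_ne : xi ≠ 0 := xprim.ne_zero (by norm_num)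

lemma z_eq : zeta5 = xi^12 := by
  rw [xi, zeta5, ← Complex.exp_nat_mul]
  congr 1
  push_cast; ring

lemma x30 : xi^30 = -1 := by
  have h : (xi^30 - 1) * (xi^30 + 1) = 0 := by linear_combination x60
  have h1 : xi^30 - 1 ≠ 0 := sub_ne_zero.2 (xprim.pow_ne_one_of_pos_of_lt (by norm_num) (by norm_num))
  rcases mul_eq_zero.1 h with h | h
  · contradiction
  · linear_combination h

def cyc {G : Type*} [Group G] (n : ℕ) [NeZero n] (x : G) (h : x^n = 1) :
    Multiplicative (ZMod n) →* G where
  toFun t := x ^ (Multiplicative.toAdd t).val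
  map_one' := by simp
  map_mul' s t := by
    rw [toAdd_mul, ZMod.val_add, ← pow_eq_pow_mod _ h, pow_add]

lemma cyc_apply {G : Type*} [Group G] (n : ℕ) [NeZero n] (x : G) (h : x^n = 1) (t) :
  cyc n x h t = x ^ (Multiplicative.toAdd t).val := rfl

def xiU : ℂˣ := Units.mk0 xi x_ne
lemma xiU_pow (n : ℕ) (h : xi^n = 1) : xiU^n = 1 := by ext; simpa [xiU] using h

def sc : ℂˣ →* GL (Fin 2) ℂ := Units.map (algebraMap ℂ (Matrix (Fin 2) (Fin 2) ℂ)).toMonoidHom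

lemma sc_comm (c : ℂˣ) (g : GL (Fin 2) ℂ) : Commute (sc c) g := by
  apply Units.ext
  exact Algebra.commutes (c : ℂ) (g : Matrix (Fin 2) (Fin 2) ℂ)

lemma sc_val (c : ℂˣ) : (sc c : Matrix (Fin 2) (Fin 2) ℂ) = !![(c:ℂ), 0; 0, (c:ℂ)] := by
  have : (sc c : Matrix (Fin 2) (Fin 2) ℂ) = algebraMap ℂ _ (c:ℂ) := rfl
  rw [this]
  ext i j; fin_cases i <;> fin_cases j <;> simp [Matrix.algebraMap_matrix_apply]

lemma d2 : (2 : ZMod 5) ≠ 0 := by decide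

lemma dS_sq : dS 2 ^ 2 = -1 := by
  have h : (2:ZMod 5)*2 = -1 := by decide
  have h' : (2:ZMod 5)⁻¹*2⁻¹ = -1 := by decide +kernel
  ext i j
  rw [pow_two]
  fin_cases i <;> fin_cases j <;>
    simp [Matrix.SpecialLinearGroup.coe_mul, dS_coe _ d2, Matrix.mul_apply, Fin.sum_univ_two, h, h']

lemma conj_sq : (MulAut.conj (dS 2))^2 = 1 := by
  rw [← map_pow, dS_sq]
  ext1 x
  simp

def psi : Multiplicative (ZMod 2) →* MulAut SL25 := cyc 2 (MulAut.conj (dS 2)) conj_sq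

def JU : GL (Fin 2) ℂ := sc (xiU^15) * rhoU (dS 2)

lemma D4 : Dm (-1) = -1 := by
  have h1 : Dp (-1) = -1 := by decide
  have h2 : Dq (-1) = 0 := by decide
  ext i j; fin_cases i <;> fin_cases j <;> simp [Dm, h1, h2]

lemma JU_sq : JU^2 = 1 := by
  rw [JU, (sc_comm _ _).mul_pow, ← map_pow, ← pow_mul]
  have h : rhoU (dS 2) ^ 2 = -1 := by
    apply Units.ext
    rw [Units.val_pow_eq_pow_val, rhoU_val, fS_dS _ d2, pow_two, ← D_mul]
    rw [show (2:ZMod 5)*2 = -1 by decide, D4]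
    simp
  rw [h]
  apply Units.ext
  rw [Units.val_mul, sc_val]
  ext i j; fin_cases i <;> fin_cases j <;> simp [xiU, x30, Matrix.mul_apply, Fin.sum_univ_two]

lemma om_cube : (sc (xiU^20))^3 = 1 := by
  rw [← map_pow, ← pow_mul, xiU_pow _ x60, map_one]

def F1 : SL25 ⋊[psi] Multiplicative (ZMod 2) →* GL (Fin 2) ℂ :=
  SemidirectProduct.lift rhoU (cyc 2 JU JU_sq) (by
    intro g
    ext1 x
    simp only [MonoidHom.comp_apply, MulEquiv.coe_toMonoidHom, psi, cyc_apply, MulAut.conj_apply,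
      JU, ← map_pow, (sc_comm _ _).mul_pow, map_mul, map_inv]
    rw [MulAut.mul_apply, MulAut.conj_apply, MulAut.conj_apply, (sc_comm _ _).eq,
      mul_inv_cancel_right])

def F : (SL25 ⋊[psi] Multiplicative (ZMod 2)) × Multiplicative (ZMod 3) →* GL (Fin 2) ℂ :=
  MonoidHom.noncommCoprod F1 (cyc 3 (sc (xiU^20)) om_cube) (by
    intro a b
    rw [cyc_apply, ← map_pow]
    exact (sc_comm _ _).symm)

lemma F_apply (x : SL25) (e j) : F (⟨x, e⟩, j) =
    rhoU x * JU ^ (Multiplicative.toAdd e).val * (sc (xiU^20))^(Multiplicative.toAdd j).val := by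
  rfl

lemma det_fS (x : SL25) : (fS x).det = 1 := by
  have hU : ∀ t, (Um t).det = 1 := fun t => by
    simp only [Um, Matrix.det_fin_two_of]
    rw [← mul_pow, ← pow_add, z5]; simp
  have hD : ∀ t, t ≠ 0 → (Dm t).det = 1 := fun t ht => by
    have k : ∀ t, t ≠ 0 → Dp t * Dp t + Dq t * Dq t = 1 := by decide +kernel
    have k := k t ht
    have : (Dp t : ℂ) * Dp t + Dq t * Dq t = 1 := by exact_mod_cast k
    simp only [Dm, Matrix.det_fin_two_of]
    linear_combination this
  have hW : (Wm).det = 1 := by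
    have h := congrFun (congrFun WW 0) 0
    rw [D4, Wm_eq] at h
    simp [Matrix.mul_apply, Fin.sum_univ_two] at h
    rw [Wm_eq]
    simp only [Matrix.det_fin_two_of]
    linear_combination -h
  obtain ⟨a, t, ha, rfl⟩ | ⟨s, c, t, hc, rfl⟩ := bruhat x
  · rw [fS_d a ha, fS_uS, Matrix.det_mul, hU, hD _ ha, one_mul]
  · rw [fS_u, fS_w, fS_d c hc, fS_uS]
    simp [Matrix.det_mul, hU, hD _ hc, hW]

lemma F_inj : Function.Injective F := by
  rw [injective_iff_map_eq_one]
  rintro ⟨⟨x, e⟩, j⟩ h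
  rw [F_apply] at h
  have hd := congrArg (fun g : GL (Fin 2) ℂ => (g : Matrix (Fin 2) (Fin 2) ℂ).det) h
  have he : (Multiplicative.toAdd e).val < 2 := ZMod.val_lt _
  have hj : (Multiplicative.toAdd j).val < 3 := ZMod.val_lt _
  simp only [JU, Units.val_mul, Units.val_pow_eq_pow_val, Matrix.det_mul, Matrix.det_pow, rhoU_val,
    det_fS, sc_val, Matrix.det_fin_two_of, Units.val_one, Matrix.det_one] at hd
  have hd' : xi^(30 * (Multiplicative.toAdd e).val + 40 * (Multiplicative.toAdd j).val) = 1 := by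
    rw [← hd, pow_add, pow_mul, pow_mul]
    simp only [xiU, Units.val_mk0]
    congr 1
    · ring
    · ring
  have hdvd := (xprim.pow_eq_one_iff_dvd _).1 hd'
  have e0 : (Multiplicative.toAdd e).val = 0 := by omega
  have j0 : (Multiplicative.toAdd j).val = 0 := by omega
  rw [e0, j0, pow_zero, pow_zero, mul_one, mul_one] at h
  have hx : x = 1 := fS_inj x (by rw [← rhoU_val, h]; rfl)
  have e1 : e = 1 := (ZMod.val_eq_zero _).1 e0
  have j1 : j = 1 := (ZMod.val_eq_zero _).1 j0
  subst hx e1 j1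
  rfl

def phi0 : GL (Fin 2) ℂ where
  val := !![xi^11, 0; 0, xi^59]
  inv := !![xi^49, 0; 0, xi]
  val_inv := by
    have h1 : xi^11 * xi^49 = 1 := by rw [← pow_add, x60]
    have h2 : xi^59 * xi = 1 := by rw [← pow_succ, x60]
    ext i j; fin_cases i <;> fin_cases j <;> simp [h1, h2]
  inv_val := by
    have h1 : xi^49 * xi^11 = 1 := by rw [← pow_add, x60]
    have h2 : xi * xi^59 = 1 := by rw [← pow_succ', x60]
    ext i j; fin_cases i <;> fin_cases j <;> simp [h1, h2]

lemma phi0_val : (phi0 : Matrix (Fin 2) (Fin 2) ℂ) = !![xi^11, 0; 0, xi^59] := rfl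

def K : Subgroup (GL (Fin 2) ℂ) := Subgroup.closure {rhoU wS, phi0}

lemma xmod (m n : ℕ) (h : m % 60 = n % 60) : xi^m = xi^n := by
  rw [pow_eq_pow_mod m x60, pow_eq_pow_mod n x60, h]

lemma diag_pow (a b : ℂ) (n : ℕ) : (!![a, 0; 0, b])^n = !![a^n, 0; 0, b^n] := by
  induction n with
  | zero => ext i j; fin_cases i <;> fin_cases j <;> simp
  | succ n ih => rw [pow_succ, ih]; simp [pow_succ]

lemma phi0_mem : phi0 ∈ K := Subgroup.subset_closure (by simp)
lemma w_mem : rhoU wS ∈ K := Subgroup.subset_closure (by simp)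

lemma sc5_mem : sc (xiU^5) ∈ K := by
  have : sc (xiU^5) = phi0^55 := by
    apply Units.ext
    rw [sc_val, Units.val_pow_eq_pow_val phi0, phi0_val, diag_pow]
    simp only [xiU, Units.val_pow_eq_pow_val, Units.val_mk0, ← pow_mul]
    rw [xmod (11*55) 5 (by norm_num), xmod (59*55) 5 (by norm_num)]
  rw [this]
  exact K.pow_mem phi0_mem _

lemma sc5n_mem (n : ℕ) : sc (xiU^(5*n)) ∈ K := by
  rw [pow_mul, map_pow]
  exact K.pow_mem sc5_mem _

lemma u_eq : phi0 = rhoU (uS 1) * sc (xiU^35) := by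
  apply Units.ext
  rw [Units.val_mul, sc_val, phi0_val, rhoU_val, fS_uS, Um, z_eq]
  have v : (1:ZMod 5).val = 1 := rfl
  simp only [xiU, Units.val_pow_eq_pow_val, Units.val_mk0, v]
  have e1 : xi^11 = ((xi^12)^3)^1 * xi^35 := by
    rw [← pow_mul, ← pow_mul, ← pow_add]; exact xmod _ _ (by norm_num)
  have e2 : xi^59 = ((xi^12)^2)^1 * xi^35 := by
    rw [← pow_mul, ← pow_mul, ← pow_add]
  ext i j; fin_cases i <;> fin_cases j <;> simp
  · simpa using e1
  · simpa using e2

lemma u1_mem : rhoU (uS 1) ∈ K := by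
  have : rhoU (uS 1) = phi0 * (sc (xiU^35))⁻¹ := by rw [u_eq]; simp
  rw [this]
  exact K.mul_mem phi0_mem (K.inv_mem (sc5n_mem 7))

lemma uS_add (s t) : uS (s+t) = uS s * uS t := by
  ext i j
  fin_cases i <;> fin_cases j <;>
    simp [Matrix.SpecialLinearGroup.coe_mul, uS_coe, Matrix.mul_apply, Fin.sum_univ_two, add_comm]

lemma uS_zero : uS 0 = 1 := by
  ext i j
  fin_cases i <;> fin_cases j <;> simp [uS_coe]

lemma uS_nat (n : ℕ) : uS (n : ZMod 5) = uS 1 ^ n := by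
  induction n with
  | zero => simp [uS_zero]
  | succ n ih => rw [Nat.cast_succ, uS_add, ih, pow_succ]

lemma u_mem (t) : rhoU (uS t) ∈ K := by
  rw [← ZMod.natCast_zmod_val t, uS_nat, map_pow]
  exact K.pow_mem u1_mem _

lemma wd (a : ZMod 5) (ha : a ≠ 0) : wS * dS a = uS a⁻¹ * wS * uS a * wS * uS a⁻¹ := by
  have k : ∀ a : ZMod 5, a ≠ 0 → !![0, -1; 1, 0] * !![a, 0; 0, a⁻¹] =
    !![1, a⁻¹; 0, 1] * !![0, -1; 1, 0] * !![1, a; 0, 1] * !![0, -1; 1, 0] * !![1, a⁻¹; 0, 1] := by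
    decide +kernel
  apply Subtype.ext
  have := k a ha
  rw [← dS_coe a ha] at this
  exact this

lemma d_mem (a) (ha : a ≠ 0) : rhoU (dS a) ∈ K := by
  have : dS a = wS⁻¹ * (uS a⁻¹ * wS * uS a * wS * uS a⁻¹) := by rw [← wd a ha]; simp
  rw [this]
  simp only [map_mul, map_inv]
  exact K.mul_mem (K.inv_mem w_mem) (K.mul_mem (K.mul_mem (K.mul_mem (K.mul_mem (u_mem _) w_mem)
    (u_mem _)) w_mem) (u_mem _))

lemma rho_mem (x) : rhoU x ∈ K := by
  obtain ⟨a, t, ha, rfl⟩ | ⟨s, c, t, hc, rfl⟩ := bruhat x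
  · rw [map_mul]
    exact K.mul_mem (d_mem a ha) (u_mem t)
  · simp only [map_mul]
    exact K.mul_mem (u_mem s) (K.mul_mem w_mem (K.mul_mem (d_mem c hc) (u_mem t)))

lemma F_range : F.range = K := by
  apply le_antisymm
  · rintro _ ⟨⟨⟨x, e⟩, j⟩, rfl⟩
    rw [F_apply]
    exact K.mul_mem (K.mul_mem (rho_mem x) (K.pow_mem (K.mul_mem (sc5n_mem 3) (rho_mem _)) _))
      (K.pow_mem (sc5n_mem 4) _)
  · rw [K, Subgroup.closure_le]
    rintro g (rfl | rfl)
    · refine ⟨(⟨wS, 1⟩, 1), ?_⟩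
      rw [F_apply]
      simp
    · refine ⟨(⟨uS 1 * (dS 2)⁻¹, Multiplicative.ofAdd 1⟩, Multiplicative.ofAdd 1), ?_⟩
      rw [F_apply, u_eq]
      have v2 : (1:ZMod 2).val = 1 := rfl
      have v3 : (1:ZMod 3).val = 1 := rfl
      rw [toAdd_ofAdd, toAdd_ofAdd, v2, v3, pow_one, pow_one, JU, (sc_comm _ _).eq, map_mul, map_inv]
      rw [show (35:ℕ) = 15 + 20 by norm_num, pow_add, map_mul]
      group

def embM : Matrix (Fin 2) (Fin 2) ℂ →* Matrix (Fin 3) (Fin 3) ℂ where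
  toFun := emb
  map_one' := by
    ext i j; fin_cases i <;> fin_cases j <;> simp [emb]
  map_mul' A B := by
    ext i j; fin_cases i <;> fin_cases j <;>
      simp [emb, Matrix.mul_apply, Fin.sum_univ_two, Fin.sum_univ_three]

def q : GL (Fin 2) ℂ →* PGL3 := (QuotientGroup.mk' scalarSub).comp (Units.map embM)

lemma q_inj : Function.Injective q := by
  rw [injective_iff_map_eq_one]
  intro g hg
  have : Units.map embM g ∈ scalarSub := by
    rw [← QuotientGroup.eq_one_iff]; exact hg
  obtain ⟨c, hc⟩ := this
  have hc := congrArg Units.val hc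
  change algebraMap ℂ (Matrix (Fin 3) (Fin 3) ℂ) (c:ℂ) = emb g at hc
  have h22 := congrFun (congrFun hc 2) 2
  have h00 := congrFun (congrFun hc 0) 0
  have h01 := congrFun (congrFun hc 0) 1
  have h10 := congrFun (congrFun hc 1) 0
  have h11 := congrFun (congrFun hc 1) 1
  simp [emb, Matrix.algebraMap_matrix_apply] at h22 h00 h01 h10 h11
  apply Units.ext
  ext i j; fin_cases i <;> fin_cases j <;> simp [← h00, ← h01, ← h10, ← h11, h22]

lemma sigma_emb : sigma = emb Wm := by
  ext i j; fin_cases i <;> fin_cases j <;> simp [emb, sigma, Wm]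

lemma phi_emb : phi = algebraMap ℂ (Matrix (Fin 3) (Fin 3) ℂ) xi * emb !![xi^11, 0; 0, xi^59] := by
  have h2 : xi * xi^59 = 1 := by rw [← pow_succ', x60]
  have h1 : xi * xi^11 = xi^12 := by rw [← pow_succ']
  ext i j
  rw [Algebra.algebraMap_eq_smul_one, smul_mul_assoc, one_mul]
  fin_cases i <;> fin_cases j <;>
    simp [emb, phi, z_eq, h1, h2]

lemma image_eq : (gen3 {sigma, phi}).map (QuotientGroup.mk' scalarSub) = K.map q := by
  rw [gen3, K, MonoidHom.map_closure, MonoidHom.map_closure]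
  congr 1
  have hs : ((Units.map embM (rhoU wS) : GL (Fin 3) ℂ) : Matrix (Fin 3) (Fin 3) ℂ) = sigma := by
    rw [sigma_emb, ← fS_wS]; rfl
  let s3 : GL (Fin 3) ℂ := Units.map (algebraMap ℂ (Matrix (Fin 3) (Fin 3) ℂ)).toMonoidHom xiU
  have hp : ((s3 * Units.map embM phi0 : GL (Fin 3) ℂ) : Matrix (Fin 3) (Fin 3) ℂ) = phi := by
    rw [phi_emb]; rfl
  have hq : QuotientGroup.mk' scalarSub (s3 * Units.map embM phi0) = q phi0 := by
    rw [map_mul]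
    have : QuotientGroup.mk' scalarSub s3 = 1 := (QuotientGroup.eq_one_iff _).2 ⟨xiU, rfl⟩
    rw [this, one_mul]; rfl
  have hS : {g : GL (Fin 3) ℂ | (g : Matrix (Fin 3) (Fin 3) ℂ) ∈ ({sigma, phi} : Set _)} =
      {Units.map embM (rhoU wS), s3 * Units.map embM phi0} := by
    ext g
    simp only [Set.mem_ofPred_eq, Set.mem_insert_iff, Set.mem_singleton_iff]
    rw [← hs, ← hp, Units.val_inj, Units.val_inj]
  rw [hS, Set.image_pair, Set.image_pair, hq]
  rfl

lemma card_SL25 : Nat.card SL25 = 120 := by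
  let e : SL25 ≃ {p : ZMod 5 × ZMod 5 × ZMod 5 × ZMod 5 // p.1 * p.2.2.2 - p.2.1 * p.2.2.1 = 1} :=
    { toFun := fun x => ⟨(x 0 0, x 0 1, x 1 0, x 1 1), det_eq x⟩
      invFun := fun p => ⟨!![p.1.1, p.1.2.1; p.1.2.2.1, p.1.2.2.2], by
        rw [Matrix.det_fin_two_of]; exact p.2⟩
      left_inv := fun x => by
        ext i j; fin_cases i <;> fin_cases j <;> rfl
      right_inv := fun p => rfl }
  rw [Nat.card_congr e, Nat.card_eq_fintype_card, Fintype.card_subtype]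
  decide +kernel

theorem stmt18 :
    Nat.card ((gen3 {sigma, phi}).map (QuotientGroup.mk' scalarSub)) = 720 ∧
    ∃ ψ : Multiplicative (ZMod 2) →* MulAut SL25,
      Nonempty ((gen3 {sigma, phi}).map (QuotientGroup.mk' scalarSub) ≃*
        (SL25 ⋊[ψ] Multiplicative (ZMod 2)) × Multiplicative (ZMod 3)) := by
  have hr : (gen3 {sigma, phi}).map (QuotientGroup.mk' scalarSub) = (q.comp F).range := by
    rw [image_eq, ← F_range, MonoidHom.range_eq_map, MonoidHom.range_eq_map, Subgroup.map_map]
  have hinj : Function.Injective (q.comp F) := q_inj.comp F_inj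
  let e := (MulEquiv.subgroupCongr hr).trans (MonoidHom.ofInjective hinj).symm
  refine ⟨?_, psi, ⟨e⟩⟩
  rw [Nat.card_congr e.toEquiv, Nat.card_prod, Nat.card_congr SemidirectProduct.equivProd,
    Nat.card_prod, card_SL25]
  simp [Nat.card_eq_fintype_card]
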